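/- (Gaussian–generalized-Cauchy KL divergence, second bound.) Let d ≥ 1. Let N_d(μ, ρ²I_d) be the spherical Gaussian probability measure on ℝ^d with mean μ ∈ ℝ^d and covariance ρ²I_d, ρ > 0, and let 𝒰_d be the generalized Cauchy distribution on ℝ^d, i.e. the probability measure with Lebesgue density x ↦ 2 / ( π · S_{d−1} · ( |x|^{d−1} + |x|^{d+1} ) ), where S_{d−1} = d·π^{d/2}/Γ(d/2 + 1) is the surface area of the unit sphere in ℝ^d and |·| is the Euclidean norm. Then D_KL( N_d(μ, ρ²I_d) ‖ 𝒰_d ) ≤ |μ|²/(2ρ²) + log( (1 + 2 d ρ²)/ρ ). -/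

import Mathlib

open MeasureTheory Real
open scoped Classical

/-- The Kullback--Leibler divergence between two measures, valued in the extended reals:
`∫ log (dQ/dU) dQ` when `Q ≪ U` and the log-likelihood ratio is `Q`-integrable,
and `+∞` otherwise. -/
noncomputable def klDiv {F : Type*} [MeasurableSpace F] (Q U : Measure F) : EReal :=
  if Q ≪ U ∧ Integrable (llr Q U) Q then ((∫ f, llr Q U f ∂Q : ℝ) : EReal) else ⊤

/-- The spherical Gaussian measure `N_d(μ, ρ²I_d)` on `ℝ^d`, with Lebesgue density
`x ↦ (2πρ²)^{−d/2} exp(−|x−μ|²/(2ρ²))`. -/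
noncomputable def gaussSph (d : ℕ) (μ : EuclideanSpace ℝ (Fin d)) (ρ : ℝ) :
    Measure (EuclideanSpace ℝ (Fin d)) :=
  volume.withDensity fun x =>
    ENNReal.ofReal ((2 * Real.pi * ρ^2) ^ (-(d:ℝ)/2) * Real.exp (-‖x - μ‖^2 / (2 * ρ^2)))

/-- The surface area `S_{d−1} = d·π^{d/2}/Γ(d/2+1)` of the unit sphere in `ℝ^d`. -/
noncomputable def sphereArea (d : ℕ) : ℝ :=
  d * Real.pi ^ ((d:ℝ)/2) / Real.Gamma ((d:ℝ)/2 + 1)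

/-- The generalized Cauchy distribution on `ℝ^d`, with Lebesgue density
`x ↦ 2/(π S_{d−1} (|x|^{d−1} + |x|^{d+1}))`. -/
noncomputable def genCauchy (d : ℕ) : Measure (EuclideanSpace ℝ (Fin d)) :=
  volume.withDensity fun x =>
    ENNReal.ofReal (2 / (Real.pi * sphereArea d * (‖x‖^(d-1) + ‖x‖^(d+1))))

/-!
The log-likelihood ratio is a combination of `‖x - μ‖²`, `log ‖x‖` and `log (1 + ‖x‖²)`. Jensen's
inequality bounds the expectations of the two logarithms in terms of `E‖X‖² = ‖μ‖² + dρ²`. The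
remaining constant is controlled by the lower bound
`Γ((d + 1)/2) ≥ (π/√2) (d/(2e))^{d/2}`, which is proved by induction in steps of two from
`Γ(x + 3/2)/Γ(x + 1/2) = x + 1/2` and the midpoint inequality `∫ log ≤ log (x + 1/2)` on
`[x, x + 1]`; log-convexity of `Γ` passes from `Γ((d + 1)/2)` to `Γ(d/2 + 1)`.
-/

open Set Metric Module
open scoped ENNReal

section Logarithm

lemma log_le_div_add_log_sub_one {x a : ℝ} (hx : 0 < x) (ha : 0 < a) :
    log x ≤ x / a + log a - 1 := by
  have h := log_le_sub_one_of_pos (div_pos hx ha)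
  rw [log_div hx.ne' ha.ne'] at h
  linarith

lemma integral_log_le_log_midpoint {a b : ℝ} (ha : 0 ≤ a) (hab : a < b) :
    ∫ x in a..b, log x ≤ (b - a) * log ((a + b) / 2) := by
  set m := (a + b) / 2 with hm
  have hm_pos : 0 < m := by linarith
  calc ∫ x in a..b, log x
      ≤ ∫ x in a..b, (x / m + (log m - 1)) :=
        intervalIntegral.integral_mono_on_of_le_Ioo hab.le intervalIntegral.intervalIntegrable_log'
          ((by fun_prop : Continuous fun x : ℝ ↦ x / m + (log m - 1)).intervalIntegrable a b)
          fun x hx ↦ by linarith [log_le_div_add_log_sub_one (ha.trans_lt hx.1) hm_pos]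
    _ = (b - a) * log m := by
        rw [intervalIntegral.integral_add (by simp) (by simp), intervalIntegral.integral_div,
          integral_id, intervalIntegral.integral_const, smul_eq_mul,
          show (b ^ 2 - a ^ 2) / 2 = (b - a) * m by rw [hm]; ring]
        field_simp
        ring

variable {α : Type*} [MeasurableSpace α] {Q : Measure α} {X : α → ℝ}

lemma integral_log_le_log_integral [IsProbabilityMeasure Q] (hpos : ∀ᵐ a ∂Q, 0 < X a)
    (hX : Integrable X Q) (hlog : Integrable (fun a ↦ log (X a)) Q) :
    ∫ a, log (X a) ∂Q ≤ log (∫ a, X a ∂Q) := by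
  set m := ∫ a, X a ∂Q with hm
  have hm_pos : 0 < m := by
    refine lt_of_le_of_ne (integral_nonneg_of_ae (hpos.mono fun _ h ↦ h.le)) fun h0 ↦ ?_
    have hzero := (integral_eq_zero_iff_of_nonneg_ae (hpos.mono fun _ h ↦ h.le) hX).1 h0.symm
    obtain ⟨a, ha, ha0⟩ := (hpos.and hzero).exists
    exact ha.ne' ha0
  calc ∫ a, log (X a) ∂Q
      ≤ ∫ a, (X a / m + (log m - 1)) ∂Q := by
        refine integral_mono_ae hlog ((hX.div_const m).add (integrable_const _)) ?_
        filter_upwards [hpos] with a ha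
        linarith [log_le_div_add_log_sub_one ha hm_pos]
    _ = log m := by
        rw [integral_add (hX.div_const m) (integrable_const _), integral_div, ← hm,
          div_self hm_pos.ne', integral_const, probReal_univ, one_smul]
        ring

lemma integrable_log_one_add (hX : Integrable X Q) (hpos : ∀ a, 0 ≤ X a) :
    Integrable (fun a ↦ log (1 + X a)) Q := by
  refine hX.mono' (measurable_log.comp_aemeasurable
    (hX.aemeasurable.const_add 1)).aestronglyMeasurable (.of_forall fun a ↦ ?_)
  have ha := hpos a
  rw [norm_of_nonneg (log_nonneg (by linarith))]
  linarith [log_le_sub_one_of_pos (show 0 < 1 + X a by linarith)]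

lemma mul_log_add_log_one_add_le {n s b : ℝ} (hn : 1 ≤ n) (hs : 0 ≤ s) (hb : 0 < b) :
    (n - 1) / 2 * (log (s + b) - log b) + log (1 + (s + b)) ≤
      n / 2 * (s / b) + log (1 + 2 * b) := by
  have hratio : log (s + b) - log b ≤ s / b := by
    rw [← log_div (by positivity) hb.ne', add_div, div_self hb.ne']
    linarith [log_le_sub_one_of_pos (show 0 < s / b + 1 by positivity)]
  have hone : log (1 + (s + b)) ≤ log (1 + 2 * b) + s / b / 2 := by
    have hfactor : 1 + (s + b) ≤ (1 + 2 * b) * (1 + s / b / 2) := by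
      have : (1 + 2 * b) * (1 + s / b / 2) = 1 + 2 * b + s + s / b / 2 := by
        field_simp
        ring
      have : 0 ≤ s / b / 2 := by positivity
      linarith
    calc log (1 + (s + b)) ≤ log ((1 + 2 * b) * (1 + s / b / 2)) :=
          log_le_log (by positivity) hfactor
      _ = log (1 + 2 * b) + log (1 + s / b / 2) := log_mul (by positivity) (by positivity)
      _ ≤ log (1 + 2 * b) + s / b / 2 := by
          linarith [log_le_sub_one_of_pos (show 0 < 1 + s / b / 2 by positivity)]
  have hscaled := mul_le_mul_of_nonneg_left hratio (show 0 ≤ (n - 1) / 2 by linarith)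
  linarith

end Logarithm

section Gamma

lemma log_Gamma_add_half_add_le {x : ℝ} (hx : 0 < x) :
    log (Gamma (x + 1 / 2)) + log x / 2 ≤ log (Gamma (x + 1)) := by
  have hrec : log (Gamma (x + 1)) = log x + log (Gamma x) := by
    rw [Gamma_add_one hx.ne', log_mul hx.ne' (Gamma_pos_of_pos hx).ne']
  have hconv := convexOn_log_Gamma.2 (mem_Ioi.2 hx) (mem_Ioi.2 (by linarith : 0 < x + 1))
    one_half_pos.le one_half_pos.le (by norm_num)
  simp only [smul_eq_mul, Function.comp_apply] at hconv
  rw [show 1 / 2 * x + 1 / 2 * (x + 1) = x + 1 / 2 by ring] at hconv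
  linarith

lemma mul_log_sub_one_add_one_le {x : ℝ} (hx : 0 ≤ x) :
    (x + 1) * (log (x + 1) - 1) ≤ x * (log x - 1) + log (x + 1 / 2) := by
  have h := integral_log_le_log_midpoint hx (lt_add_one x)
  rw [integral_log, show (x + (x + 1)) / 2 = x + 1 / 2 by ring] at h
  linarith

lemma log_Gamma_ge_add_one {c x : ℝ} (hx : 0 ≤ x)
    (h : c + x * (log x - 1) ≤ log (Gamma (x + 1 / 2))) :
    c + (x + 1) * (log (x + 1) - 1) ≤ log (Gamma (x + 1 + 1 / 2)) := by
  have hpos : 0 < x + 1 / 2 := by linarith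
  rw [show x + 1 + 1 / 2 = x + 1 / 2 + 1 by ring, Gamma_add_one hpos.ne',
    log_mul hpos.ne' (Gamma_pos_of_pos hpos).ne']
  linarith [mul_log_sub_one_add_one_le hx]

lemma log_Gamma_half_succ_ge (n : ℕ) :
    log (π ^ 2 / 2) / 2 + (n + 1) / 2 * (log ((n + 1) / 2) - 1) ≤
      log (Gamma ((n + 1) / 2 + 1 / 2)) := by
  induction n using Nat.twoStepInduction with
  | zero =>
    have hlog : log (π ^ 2 / 2) ≤ log 2 + 1 := by
      rw [← log_exp 1, ← log_mul two_ne_zero (exp_ne_zero 1)]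
      exact log_le_log (by positivity) (by nlinarith [pi_lt_d2, pi_pos, exp_one_gt_d9])
    have hhalf : log (1 / 2) = -log 2 := by rw [one_div, log_inv]
    rw [Nat.cast_zero, zero_add, add_halves, Gamma_one, log_one, hhalf]
    linarith
  | one =>
    have hGamma : Gamma (1 + 1 / 2) = √π / 2 := by
      rw [add_comm, Gamma_add_one (by norm_num), Gamma_one_half_eq]
      ring
    have hlog : log π + log 2 ≤ 2 := by
      rw [← log_mul pi_ne_zero two_ne_zero, log_le_iff_le_exp (by positivity),
        show (2 : ℝ) = 1 + 1 by norm_num, exp_add]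
      nlinarith [pi_lt_d2, exp_one_gt_d9]
    rw [Nat.cast_one, show ((1 : ℝ) + 1) / 2 = 1 by norm_num, hGamma, log_one,
      log_div (by positivity) two_ne_zero, log_pow, log_div (by positivity) two_ne_zero,
      log_sqrt pi_pos.le]
    push_cast
    linarith
  | more n ih _ =>
    have hshift : ((n + 2 : ℕ) + 1 : ℝ) / 2 = (n + 1) / 2 + 1 := by
      push_cast
      ring
    rw [hshift]
    exact log_Gamma_ge_add_one (by positivity) ih

lemma sphereArea_pos (d : ℕ) [NeZero d] : 0 < sphereArea d := by
  have hd : (0 : ℝ) < d := by exact_mod_cast NeZero.pos d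
  unfold sphereArea
  positivity

lemma log_sphereArea (d : ℕ) [NeZero d] :
    log (sphereArea d) = log d + d / 2 * log π - log (Gamma (d / 2 + 1)) := by
  have hd : (0 : ℝ) < d := by exact_mod_cast NeZero.pos d
  have hGamma : 0 < Gamma ((d : ℝ) / 2 + 1) := Gamma_pos_of_pos (by positivity)
  rw [sphereArea, log_div (by positivity) hGamma.ne', log_mul hd.ne' (by positivity),
    log_rpow pi_pos]

lemma log_pi_mul_sphereArea_div_two_le (d : ℕ) [NeZero d] :
    log (π * sphereArea d / 2) ≤ log d / 2 + d / 2 * (1 + log (2 * π) - log d) := by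
  have hd : (0 : ℝ) < d := by exact_mod_cast NeZero.pos d
  have hGamma : log (π ^ 2 / 2) / 2 + d / 2 * (log (d / 2) - 1) ≤
      log (Gamma (d / 2 + 1 / 2)) := by
    obtain ⟨n, hn⟩ := Nat.exists_eq_succ_of_ne_zero (NeZero.ne d)
    simpa only [hn, Nat.succ_eq_add_one, Nat.cast_add_one] using log_Gamma_half_succ_ge n
  have hhalf := log_Gamma_add_half_add_le (half_pos hd)
  rw [log_div (by positivity) two_ne_zero, log_pow, log_div hd.ne' two_ne_zero] at hGamma
  rw [log_div hd.ne' two_ne_zero] at hhalf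
  rw [log_div (mul_ne_zero pi_ne_zero (sphereArea_pos d).ne') two_ne_zero,
    log_mul pi_ne_zero (sphereArea_pos d).ne', log_sphereArea, log_mul two_ne_zero pi_ne_zero]
  push_cast at hGamma
  linarith

lemma log_gauss_cauchy_const_le (d : ℕ) [NeZero d] {ρ : ℝ} (hρ : 0 < ρ) :
    -(d : ℝ) / 2 * log (2 * π * ρ ^ 2) - d / 2 + log (π * sphereArea d / 2) ≤
      -((d - 1) / 2 * log (d * ρ ^ 2)) - log ρ := by
  have hd : (0 : ℝ) < d := by exact_mod_cast NeZero.pos d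
  have h := log_pi_mul_sphereArea_div_two_le d
  rw [log_mul (by positivity) (by positivity), log_mul hd.ne' (by positivity), log_pow]
  push_cast
  linarith

end Gamma

section RadialIntegrals

variable {E : Type*} [NormedAddCommGroup E] [NormedSpace ℝ E] [FiniteDimensional ℝ E]
  [Nontrivial E] [MeasurableSpace E] [BorelSpace E]

lemma integral_norm_pow_mul_exp_neg_mul_sq_norm (ν : Measure E) [ν.IsAddHaarMeasure]
    (k : ℕ) {b : ℝ} (hb : 0 < b) :
    ∫ x, ‖x‖ ^ k * exp (-b * ‖x‖ ^ 2) ∂ν =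
      finrank ℝ E * ν.real (ball 0 1) *
        (b ^ (-((finrank ℝ E : ℝ) + k) / 2) / 2 * Gamma ((finrank ℝ E + k) / 2)) := by
  have hdim : (1 : ℝ) ≤ finrank ℝ E := by exact_mod_cast finrank_pos (R := ℝ) (M := E)
  have hexp : ∀ y ∈ Ioi (0 : ℝ), y ^ (finrank ℝ E - 1) • (y ^ k * exp (-b * y ^ 2)) =
      y ^ ((finrank ℝ E : ℝ) - 1 + k) * exp (-b * y ^ (2 : ℝ)) := by
    intro y _
    rw [smul_eq_mul, ← mul_assoc, ← pow_add, ← rpow_natCast y (finrank ℝ E - 1 + k), rpow_two,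
      Nat.cast_add, Nat.cast_sub finrank_pos, Nat.cast_one]
  rw [integral_fun_norm_addHaar ν fun y ↦ y ^ k * exp (-b * y ^ 2),
    setIntegral_congr_fun measurableSet_Ioi hexp,
    integral_rpow_mul_exp_neg_mul_rpow two_pos (by linarith [k.cast_nonneg (α := ℝ)]) hb,
    nsmul_eq_mul, smul_eq_mul, show (finrank ℝ E : ℝ) - 1 + k + 1 = finrank ℝ E + k by ring]
  ring

lemma integral_sq_norm_mul_exp_neg_mul_sq_norm (ν : Measure E) [ν.IsAddHaarMeasure]
    {b : ℝ} (hb : 0 < b) :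
    ∫ x, ‖x‖ ^ 2 * exp (-b * ‖x‖ ^ 2) ∂ν =
      finrank ℝ E / (2 * b) * ∫ x, exp (-b * ‖x‖ ^ 2) ∂ν := by
  have hdim : (0 : ℝ) < finrank ℝ E := by exact_mod_cast finrank_pos (R := ℝ) (M := E)
  have hmass := integral_norm_pow_mul_exp_neg_mul_sq_norm ν 0 hb
  simp only [pow_zero, one_mul, Nat.cast_zero, add_zero] at hmass
  rw [hmass, integral_norm_pow_mul_exp_neg_mul_sq_norm ν 2 hb, Nat.cast_ofNat, add_div,
    div_self two_ne_zero, Gamma_add_one (by positivity),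
    show -((finrank ℝ E : ℝ) + 2) / 2 = -finrank ℝ E / 2 - 1 by ring, rpow_sub_one hb.ne']
  field_simp

lemma integrableOn_log_norm_ball (ν : Measure E) [ν.IsAddHaarMeasure] (r : ℝ) :
    IntegrableOn (fun x ↦ log ‖x‖) (ball 0 r) ν := by
  refine (integrableOn_fun_norm_addHaar ν (f := log)).2 ?_
  have hlog : IntegrableOn log (Icc 0 r) :=
    (integrableOn_Icc_iff_integrableOn_Ioc (by simp)).2
      intervalIntegral.intervalIntegrable_log'.1
  exact (hlog.continuousOn_mul (continuous_pow _).continuousOn isCompact_Icc).mono_set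
    Ioo_subset_Icc_self

lemma integrable_log_norm_of_le_smul {ν Q : Measure E} [ν.IsAddHaarMeasure] {C : ℝ≥0∞}
    (hC : C ≠ ∞) (hQ : Q ≤ C • ν) (hsq : Integrable (fun x ↦ ‖x‖ ^ 2) Q) :
    Integrable (fun x ↦ log ‖x‖) Q := by
  have hball : IntegrableOn (fun x ↦ log ‖x‖) (ball 0 1) Q :=
    ((integrableOn_log_norm_ball ν 1).integrable.smul_measure hC).mono_measure <|
      (Measure.restrict_mono_measure hQ _).trans_eq (Measure.restrict_smul _ _ _)
  have hcompl : IntegrableOn (fun x ↦ log ‖x‖) (ball 0 1)ᶜ Q := by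
    refine hsq.integrableOn.mono' (by fun_prop : Measurable _).aestronglyMeasurable ?_
    filter_upwards [self_mem_ae_restrict measurableSet_ball.compl] with x hx
    have hx : 1 ≤ ‖x‖ := by simpa using hx
    rw [norm_of_nonneg (log_nonneg hx)]
    nlinarith [log_le_sub_one_of_pos (zero_lt_one.trans_le hx)]
  exact integrableOn_univ.1 (union_compl_self (ball (0 : E) 1) ▸ hball.union hcompl)

end RadialIntegrals

section InvariantMeasures

variable {E : Type*} [NormedAddCommGroup E] [MeasurableSpace E] [BorelSpace E]
  [SecondCountableTopology E] {Q : Measure E}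

lemma integrable_sq_norm_add_const [IsFiniteMeasure Q]
    (hsq : Integrable (fun x ↦ ‖x‖ ^ 2) Q) (v : E) : Integrable (fun x ↦ ‖x + v‖ ^ 2) Q := by
  have hid : MemLp id 2 Q := (memLp_two_iff_integrable_sq_norm aestronglyMeasurable_id).2 hsq
  exact (hid.add (memLp_const v)).integrable_norm_pow two_ne_zero

variable [InnerProductSpace ℝ E]

lemma integral_sq_norm_add_const [IsProbabilityMeasure Q] [Q.IsNegInvariant]
    (hsq : Integrable (fun x ↦ ‖x‖ ^ 2) Q) (v : E) :
    ∫ x, ‖x + v‖ ^ 2 ∂Q = ∫ x, ‖x‖ ^ 2 ∂Q + ‖v‖ ^ 2 := by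
  have hreflect : ∫ x, ‖x - v‖ ^ 2 ∂Q = ∫ x, ‖x + v‖ ^ 2 ∂Q := by
    rw [← integral_neg_eq_self]
    exact integral_congr_ae (.of_forall fun x ↦ by
      simp only [← neg_add', norm_neg])
  have hminus : Integrable (fun x ↦ ‖x - v‖ ^ 2) Q := by
    simpa only [sub_eq_add_neg] using integrable_sq_norm_add_const hsq (-v)
  have hsum := integral_add (integrable_sq_norm_add_const hsq v) hminus
  have hparallelogram (x : E) : ‖x + v‖ ^ 2 + ‖x - v‖ ^ 2 = 2 * ‖x‖ ^ 2 + 2 * ‖v‖ ^ 2 := by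
    linarith [parallelogram_law_with_norm ℝ x v]
  simp only [hparallelogram] at hsum
  rw [integral_add (hsq.const_mul 2) (integrable_const _), integral_const_mul, integral_const,
    probReal_univ, one_smul, hreflect] at hsum
  linarith

end InvariantMeasures

section Densities

variable {α β : Type*} [MeasurableSpace α] [MeasurableSpace β]

lemma map_withDensity_comp {ν : Measure α} {ν' : Measure β} {φ : α → β}
    (hφ : MeasurePreserving φ ν ν') {f : β → ℝ≥0∞} (hf : Measurable f) :
    (ν.withDensity (f ∘ φ)).map φ = ν'.withDensity f := by
  ext s hs
  rw [Measure.map_apply hφ.measurable hs, withDensity_apply _ (hφ.measurable hs),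
    withDensity_apply _ hs]
  exact hφ.setLIntegral_comp_preimage hs hf

variable {ν : Measure α} [SigmaFinite ν] {f g : α → ℝ}

lemma llr_withDensity_ofReal (hf : Measurable f) (hg : Measurable g)
    (hf_pos : ∀ᵐ a ∂ν, 0 < f a) (hg_pos : ∀ᵐ a ∂ν, 0 < g a) :
    llr (ν.withDensity fun a ↦ ENNReal.ofReal (f a)) (ν.withDensity fun a ↦ ENNReal.ofReal (g a))
      =ᵐ[ν] fun a ↦ log (f a) - log (g a) := by
  have hright := Measure.rnDeriv_withDensity_right
    (ν.withDensity fun a ↦ ENNReal.ofReal (f a)) ν hg.ennreal_ofReal.aemeasurable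
    (hg_pos.mono fun _ h ↦ (ENNReal.ofReal_pos.2 h).ne') (by simp)
  filter_upwards [hright, Measure.rnDeriv_withDensity ν hf.ennreal_ofReal, hf_pos, hg_pos]
    with a hgright hleft hfa hga
  rw [llr, hgright, hleft, ENNReal.toReal_mul, ENNReal.toReal_inv,
    ENNReal.toReal_ofReal hga.le, ENNReal.toReal_ofReal hfa.le, inv_mul_eq_div,
    log_div hfa.ne' hga.ne']

lemma klDiv_withDensity_ofReal (hf : Measurable f) (hg : Measurable g)
    (hf_pos : ∀ᵐ a ∂ν, 0 < f a) (hg_pos : ∀ᵐ a ∂ν, 0 < g a)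
    (hint : Integrable (fun a ↦ log (f a) - log (g a))
      (ν.withDensity fun a ↦ ENNReal.ofReal (f a))) :
    klDiv (ν.withDensity fun a ↦ ENNReal.ofReal (f a))
        (ν.withDensity fun a ↦ ENNReal.ofReal (g a)) =
      ((∫ a, log (f a) - log (g a) ∂ν.withDensity fun a ↦ ENNReal.ofReal (f a) : ℝ) : EReal) := by
  have hac : ν.withDensity (fun a ↦ ENNReal.ofReal (f a)) ≪ ν :=
    withDensity_absolutelyContinuous _ _
  have hac' : ν ≪ ν.withDensity fun a ↦ ENNReal.ofReal (g a) :=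
    withDensity_absolutelyContinuous' hg.ennreal_ofReal.aemeasurable
      (hg_pos.mono fun _ h ↦ (ENNReal.ofReal_pos.2 h).ne')
  have hllr := hac.ae_le (llr_withDensity_ofReal hf hg hf_pos hg_pos)
  rw [klDiv, if_pos ⟨hac.trans hac', hint.congr (Filter.EventuallyEq.symm hllr)⟩,
    integral_congr_ae hllr]

end Densities

section Gaussian

variable {d : ℕ}

/-- The Lebesgue density of `gaussSph d μ ρ`. -/
noncomputable def gaussSphPDF (d : ℕ) (μ : EuclideanSpace ℝ (Fin d)) (ρ : ℝ)
    (x : EuclideanSpace ℝ (Fin d)) : ℝ :=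
  (2 * π * ρ ^ 2) ^ (-(d : ℝ) / 2) * exp (-‖x - μ‖ ^ 2 / (2 * ρ ^ 2))

variable (μ : EuclideanSpace ℝ (Fin d)) {ρ : ℝ}

lemma gaussSph_eq_withDensity (ρ : ℝ) :
    gaussSph d μ ρ = volume.withDensity fun x ↦ ENNReal.ofReal (gaussSphPDF d μ ρ x) :=
  rfl

@[fun_prop]
lemma measurable_gaussSphPDF (ρ : ℝ) : Measurable (gaussSphPDF d μ ρ) := by
  unfold gaussSphPDF
  fun_prop

lemma gaussSphPDF_pos (hρ : ρ ≠ 0) (x : EuclideanSpace ℝ (Fin d)) : 0 < gaussSphPDF d μ ρ x := by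
  unfold gaussSphPDF
  positivity

lemma gaussSphPDF_zero_eq (ρ : ℝ) (x : EuclideanSpace ℝ (Fin d)) :
    gaussSphPDF d 0 ρ x =
      (2 * π * ρ ^ 2) ^ (-(d : ℝ) / 2) * exp (-(1 / (2 * ρ ^ 2)) * ‖x‖ ^ 2) := by
  rw [gaussSphPDF, sub_zero, show -‖x‖ ^ 2 / (2 * ρ ^ 2) = -(1 / (2 * ρ ^ 2)) * ‖x‖ ^ 2 by ring]

lemma log_gaussSphPDF (hρ : ρ ≠ 0) (x : EuclideanSpace ℝ (Fin d)) :
    log (gaussSphPDF d μ ρ x) =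
      -(d : ℝ) / 2 * log (2 * π * ρ ^ 2) - ‖x - μ‖ ^ 2 / (2 * ρ ^ 2) := by
  rw [gaussSphPDF, log_mul (by positivity) (exp_ne_zero _), log_exp, log_rpow (by positivity)]
  ring

lemma integral_gaussSphPDF_zero (hρ : ρ ≠ 0) : ∫ x, gaussSphPDF d 0 ρ x = 1 := by
  simp only [gaussSphPDF_zero_eq]
  rw [integral_const_mul, GaussianFourier.integral_rexp_neg_mul_sq_norm (by positivity),
    finrank_euclideanSpace_fin, div_div_eq_mul_div, div_one, mul_left_comm, ← mul_assoc,
    ← rpow_add (by positivity), neg_div, neg_add_cancel, rpow_zero]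

lemma map_add_right_gaussSph_zero (ρ : ℝ) :
    (gaussSph d 0 ρ).map (· + μ) = gaussSph d μ ρ := by
  have h := map_withDensity_comp (measurePreserving_add_right volume μ)
    (measurable_gaussSphPDF μ ρ).ennreal_ofReal
  simpa [Function.comp_def, gaussSphPDF, gaussSph] using h

instance isNegInvariant_gaussSph_zero : (gaussSph d 0 ρ).IsNegInvariant where
  neg_eq_self := by
    have h := map_withDensity_comp (Measure.measurePreserving_neg volume)
      (measurable_gaussSphPDF (0 : EuclideanSpace ℝ (Fin d)) ρ).ennreal_ofReal
    simpa [Function.comp_def, gaussSphPDF, gaussSph, Measure.neg] using h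

lemma isProbabilityMeasure_gaussSph (hρ : ρ ≠ 0) : IsProbabilityMeasure (gaussSph d μ ρ) := by
  have hzero : IsProbabilityMeasure (gaussSph d 0 ρ) := by
    refine ⟨?_⟩
    rw [gaussSph_eq_withDensity, withDensity_apply _ .univ, Measure.restrict_univ,
      ← ofReal_integral_eq_lintegral_ofReal
        (integrable_of_integral_eq_one (integral_gaussSphPDF_zero hρ))
        (.of_forall fun x ↦ (gaussSphPDF_pos 0 hρ x).le),
      integral_gaussSphPDF_zero hρ, ENNReal.ofReal_one]
  rw [← map_add_right_gaussSph_zero]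
  exact Measure.isProbabilityMeasure_map (by fun_prop)

lemma gaussSph_le_smul_volume (ρ : ℝ) :
    gaussSph d μ ρ ≤ ENNReal.ofReal ((2 * π * ρ ^ 2) ^ (-(d : ℝ) / 2)) • volume := by
  rw [gaussSph_eq_withDensity, ← withDensity_const]
  refine withDensity_mono (.of_forall fun x ↦ ENNReal.ofReal_le_ofReal ?_)
  refine mul_le_of_le_one_right (by positivity) (exp_le_one_iff.2 ?_)
  exact div_nonpos_of_nonpos_of_nonneg (neg_nonpos.2 (sq_nonneg _)) (by positivity)

lemma integral_gaussSph (hρ : ρ ≠ 0) (F : EuclideanSpace ℝ (Fin d) → ℝ) :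
    ∫ x, F x ∂gaussSph d μ ρ = ∫ x, gaussSphPDF d μ ρ x * F x := by
  rw [gaussSph_eq_withDensity,
    integral_withDensity_eq_integral_toReal_smul (by fun_prop) (by simp)]
  simp only [ENNReal.toReal_ofReal (gaussSphPDF_pos μ hρ _).le, smul_eq_mul]

lemma integral_sq_norm_gaussSph_zero [NeZero d] (hρ : ρ ≠ 0) :
    ∫ x, ‖x‖ ^ 2 ∂gaussSph d 0 ρ = d * ρ ^ 2 := by
  have hmass := integral_gaussSphPDF_zero (d := d) hρ
  simp only [gaussSphPDF_zero_eq, integral_const_mul] at hmass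
  simp only [integral_gaussSph 0 hρ, gaussSphPDF_zero_eq, mul_right_comm _ (exp _),
    mul_assoc _ _ (exp _), integral_const_mul]
  rw [integral_sq_norm_mul_exp_neg_mul_sq_norm volume (by positivity), mul_left_comm, hmass,
    finrank_euclideanSpace_fin]
  field_simp

variable [NeZero d] (hρ : ρ ≠ 0)
include hρ

lemma integrable_sq_norm_gaussSph_zero :
    Integrable (fun x ↦ ‖x‖ ^ 2) (gaussSph d 0 ρ) := by
  refine .of_integral_ne_zero ?_
  rw [integral_sq_norm_gaussSph_zero hρ]
  have : (d : ℝ) ≠ 0 := NeZero.ne _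
  positivity

lemma integrable_sq_norm_gaussSph : Integrable (fun x ↦ ‖x‖ ^ 2) (gaussSph d μ ρ) := by
  have := isProbabilityMeasure_gaussSph (0 : EuclideanSpace ℝ (Fin d)) hρ
  rw [← map_add_right_gaussSph_zero, integrable_map_measure (by fun_prop) (by fun_prop)]
  exact integrable_sq_norm_add_const (integrable_sq_norm_gaussSph_zero hρ) μ

lemma integral_sq_norm_gaussSph : ∫ x, ‖x‖ ^ 2 ∂gaussSph d μ ρ = ‖μ‖ ^ 2 + d * ρ ^ 2 := by
  have := isProbabilityMeasure_gaussSph (0 : EuclideanSpace ℝ (Fin d)) hρ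
  rw [← map_add_right_gaussSph_zero, integral_map (by fun_prop) (by fun_prop),
    integral_sq_norm_add_const (integrable_sq_norm_gaussSph_zero hρ),
    integral_sq_norm_gaussSph_zero hρ, add_comm]

lemma integrable_sq_norm_sub_gaussSph :
    Integrable (fun x ↦ ‖x - μ‖ ^ 2) (gaussSph d μ ρ) := by
  rw [← map_add_right_gaussSph_zero, integrable_map_measure (by fun_prop) (by fun_prop)]
  simpa only [Function.comp_def, add_sub_cancel_right] using integrable_sq_norm_gaussSph_zero hρ

lemma integral_sq_norm_sub_gaussSph : ∫ x, ‖x - μ‖ ^ 2 ∂gaussSph d μ ρ = d * ρ ^ 2 := by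
  rw [← map_add_right_gaussSph_zero, integral_map (by fun_prop) (by fun_prop)]
  simp only [add_sub_cancel_right, integral_sq_norm_gaussSph_zero hρ]

lemma integrable_log_norm_gaussSph : Integrable (fun x ↦ log ‖x‖) (gaussSph d μ ρ) :=
  integrable_log_norm_of_le_smul ENNReal.ofReal_ne_top (gaussSph_le_smul_volume μ ρ)
    (integrable_sq_norm_gaussSph μ hρ)

lemma integral_log_norm_gaussSph_le :
    ∫ x, log ‖x‖ ∂gaussSph d μ ρ ≤ log (‖μ‖ ^ 2 + d * ρ ^ 2) / 2 := by
  have := isProbabilityMeasure_gaussSph μ hρ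
  have hne : ∀ᵐ x ∂gaussSph d μ ρ, x ≠ 0 :=
    (withDensity_absolutelyContinuous volume _).ae_le (Measure.ae_ne volume 0)
  have hlog_sq (x : EuclideanSpace ℝ (Fin d)) : log (‖x‖ ^ 2) = 2 * log ‖x‖ := by simp
  have h := integral_log_le_log_integral (hne.mono fun x hx ↦ pow_pos (norm_pos_iff.2 hx) 2)
    (integrable_sq_norm_gaussSph μ hρ)
    (by simpa only [hlog_sq] using (integrable_log_norm_gaussSph μ hρ).const_mul 2)
  simp only [hlog_sq, integral_const_mul, integral_sq_norm_gaussSph μ hρ] at h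
  linarith

lemma integrable_log_one_add_sq_norm_gaussSph :
    Integrable (fun x ↦ log (1 + ‖x‖ ^ 2)) (gaussSph d μ ρ) :=
  integrable_log_one_add (integrable_sq_norm_gaussSph μ hρ) fun _ ↦ sq_nonneg _

lemma integral_log_one_add_sq_norm_gaussSph_le :
    ∫ x, log (1 + ‖x‖ ^ 2) ∂gaussSph d μ ρ ≤ log (1 + (‖μ‖ ^ 2 + d * ρ ^ 2)) := by
  have := isProbabilityMeasure_gaussSph μ hρ
  have hsq := integrable_sq_norm_gaussSph μ hρ
  have hone_add : Integrable (fun x ↦ 1 + ‖x‖ ^ 2) (gaussSph d μ ρ) := (integrable_const 1).add hsq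
  have hpos : ∀ᵐ x ∂gaussSph d μ ρ, 0 < 1 + ‖x‖ ^ 2 := .of_forall fun x ↦ by positivity
  refine (integral_log_le_log_integral hpos hone_add
    (integrable_log_one_add_sq_norm_gaussSph μ hρ)).trans_eq ?_
  rw [integral_add (integrable_const 1) hsq, integral_const, probReal_univ, one_smul,
    integral_sq_norm_gaussSph μ hρ]

end Gaussian

section GenCauchy

/-- The Lebesgue density of `genCauchy d`. -/
noncomputable def genCauchyPDF (d : ℕ) (x : EuclideanSpace ℝ (Fin d)) : ℝ :=
  2 / (π * sphereArea d * (‖x‖ ^ (d - 1) + ‖x‖ ^ (d + 1)))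

@[fun_prop]
lemma measurable_genCauchyPDF (d : ℕ) : Measurable (genCauchyPDF d) := by
  unfold genCauchyPDF
  fun_prop

variable {d : ℕ} [NeZero d]

lemma genCauchyPDF_pos {x : EuclideanSpace ℝ (Fin d)} (hx : x ≠ 0) : 0 < genCauchyPDF d x := by
  have := sphereArea_pos d
  have := norm_pos_iff.2 hx
  unfold genCauchyPDF
  positivity

lemma log_genCauchyPDF {x : EuclideanSpace ℝ (Fin d)} (hx : x ≠ 0) :
    log (genCauchyPDF d x) =
      -(log (π * sphereArea d / 2) + (d - 1) * log ‖x‖ + log (1 + ‖x‖ ^ 2)) := by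
  have := sphereArea_pos d
  have := norm_pos_iff.2 hx
  have hd : 1 ≤ d := NeZero.one_le
  have hinv : genCauchyPDF d x =
      (π * sphereArea d / 2 * ‖x‖ ^ (d - 1) * (1 + ‖x‖ ^ 2))⁻¹ := by
    rw [genCauchyPDF, show d + 1 = d - 1 + 2 by omega, pow_add]
    field_simp
  rw [hinv, log_inv, log_mul (by positivity) (by positivity),
    log_mul (by positivity) (by positivity), log_pow, Nat.cast_sub hd, Nat.cast_one]

lemma klDiv_gaussSph_genCauchy (μ : EuclideanSpace ℝ (Fin d)) {ρ : ℝ} (hρ : ρ ≠ 0) :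
    klDiv (gaussSph d μ ρ) (genCauchy d) =
      ((-(d : ℝ) / 2 * log (2 * π * ρ ^ 2) - d / 2 + log (π * sphereArea d / 2) +
        (d - 1) * ∫ x, log ‖x‖ ∂gaussSph d μ ρ +
        ∫ x, log (1 + ‖x‖ ^ 2) ∂gaussSph d μ ρ : ℝ) : EReal) := by
  have := isProbabilityMeasure_gaussSph μ hρ
  have hne : ∀ᵐ x : EuclideanSpace ℝ (Fin d), x ≠ 0 := Measure.ae_ne volume 0
  set c := -(d : ℝ) / 2 * log (2 * π * ρ ^ 2) + log (π * sphereArea d / 2) with hc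
  have hratio : (fun x ↦ log (gaussSphPDF d μ ρ x) - log (genCauchyPDF d x))
      =ᵐ[gaussSph d μ ρ] fun x ↦ c - ‖x - μ‖ ^ 2 / (2 * ρ ^ 2) + (d - 1) * log ‖x‖ +
        log (1 + ‖x‖ ^ 2) := by
    filter_upwards [(withDensity_absolutelyContinuous volume _).ae_le hne] with x hx
    rw [log_gaussSphPDF μ hρ, log_genCauchyPDF hx, hc]
    ring
  have hsq := (integrable_sq_norm_sub_gaussSph μ hρ).div_const (2 * ρ ^ 2)
  have hlog := (integrable_log_norm_gaussSph μ hρ).const_mul ((d : ℝ) - 1)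
  have hlog_one_add := integrable_log_one_add_sq_norm_gaussSph μ hρ
  have hquad : Integrable (fun x ↦ c - ‖x - μ‖ ^ 2 / (2 * ρ ^ 2)) (gaussSph d μ ρ) :=
    (integrable_const c).sub hsq
  have hquad_add_log : Integrable (fun x ↦ c - ‖x - μ‖ ^ 2 / (2 * ρ ^ 2) + (d - 1) * log ‖x‖)
      (gaussSph d μ ρ) := hquad.add hlog
  have hkl := klDiv_withDensity_ofReal (measurable_gaussSphPDF μ ρ) (measurable_genCauchyPDF d)
    (.of_forall (gaussSphPDF_pos μ hρ)) (hne.mono fun _ ↦ genCauchyPDF_pos)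
    ((hquad_add_log.add hlog_one_add).congr hratio.symm)
  refine hkl.trans (congrArg _ ((integral_congr_ae hratio).trans ?_))
  rw [integral_add hquad_add_log hlog_one_add, integral_add hquad hlog,
    integral_sub (integrable_const c) hsq, integral_div, integral_sq_norm_sub_gaussSph μ hρ,
    integral_const_mul, integral_const, probReal_univ, one_smul, hc]
  field_simp
  ring

end GenCauchy

/-- **Gaussian--generalized-Cauchy KL divergence, second bound.**
`D_KL(N_d(μ,ρ²I)‖𝒰_d) ≤ |μ|²/(2ρ²) + log((1+2dρ²)/ρ)`. -/
theorem kl_gauss_genCauchy_second (d : ℕ) (hd : 1 ≤ d)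
    (μ : EuclideanSpace ℝ (Fin d)) (ρ : ℝ) (hρ : 0 < ρ) :
    klDiv (gaussSph d μ ρ) (genCauchy d) ≤
      ((‖μ‖^2 / (2 * ρ^2) + Real.log ((1 + 2 * d * ρ^2) / ρ) : ℝ) : EReal) := by
  have : NeZero d := ⟨by omega⟩
  have hd' : (1 : ℝ) ≤ d := by exact_mod_cast hd
  rw [klDiv_gaussSph_genCauchy μ hρ.ne', EReal.coe_le_coe_iff]
  have hlog := mul_le_mul_of_nonneg_left (integral_log_norm_gaussSph_le μ hρ.ne')
    (sub_nonneg.2 hd')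
  have hlog_one_add := integral_log_one_add_sq_norm_gaussSph_le μ hρ.ne'
  have hconst := log_gauss_cauchy_const_le d hρ
  have hbound := mul_log_add_log_one_add_le hd' (sq_nonneg ‖μ‖)
    (show 0 < (d : ℝ) * ρ ^ 2 by positivity)
  have hmean : (d : ℝ) / 2 * (‖μ‖ ^ 2 / (d * ρ ^ 2)) = ‖μ‖ ^ 2 / (2 * ρ ^ 2) := by field_simp
  rw [hmean, ← mul_assoc 2] at hbound
  rw [log_div (by positivity) hρ.ne']
  linarith
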